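/- arXiv:2003.03077 — 4 statements merged into one kernel-verified Lean document; each statement's English description precedes it below -/
import Mathlib

section
/- Let f : ℝ → ℝ be defined by f(y) = 2·√(−𝖴(y)·𝖴₁(y)·𝖵(y)·𝖵₁(y)) / g(y) (with the convention √t = 0 for t < 0 and division-by-zero junk values where g vanishes). Then at every point y ∈ ℝ such that (𝖴·𝖴₁·𝖵·𝖵₁)(y) < 0 and g(y) ≠ 0, the function f has derivative −h(y) / ( g(y)² · √(−𝖴(y)·𝖴₁(y)·𝖵(y)·𝖵₁(y)) ) at y. -/
/-!
Put `a = U V₁` and `b = V U₁`, so that `g = a + b` and `f = 2 √(-ab) / (a + b)`.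
Since `v' u - u' v` is the Wronskian of the two Airy solutions, which is identically `1`
(`airy_wronskian`), multiplicativity of determinants gives `a - b = 1` everywhere. The Airy equation
yields `U' = U₁ - y V`, `U₁' = (y+c) U - y V₁`, `V' = V₁ - U`, `V₁' = (y+c) V - U₁`, hence
`a' = b' = h`. The quotient rule then gives
`f' = (-(ab)' g + 2 ab g') / (g² √(-ab))`, whose numerator is
`-h (a+b)² + 4 ab h = -h (a-b)² = -h`.
-/

theorem airy_wronskian
    (u v u' v' : ℝ → ℝ)
    (hu : ∀ x, HasDerivAt u (u' x) x)
    (hu' : ∀ x, HasDerivAt u' (x * u x) x)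
    (hv : ∀ x, HasDerivAt v (v' x) x)
    (hv' : ∀ x, HasDerivAt v' (x * v x) x)
    (hu0 : u 0 = 1) (hu'0 : u' 0 = 0) (hv0 : v 0 = 0) (hv'0 : v' 0 = 1) (x : ℝ) :
    u x * v' x - u' x * v x = 1 := by
  have hW : ∀ t, HasDerivAt (fun t => u t * v' t - u' t * v t) 0 t := fun t =>
    (((hu t).fun_mul (hv' t)).fun_sub ((hu' t).fun_mul (hv t))).congr_deriv (by ring)
  have hconst := is_const_of_deriv_eq_zero (fun t => (hW t).differentiableAt)
    (fun t => (hW t).deriv) x 0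
  simpa [hu0, hu'0, hv0, hv'0] using hconst

/-- Derivative of f = 2√(−𝖴𝖴₁𝖵𝖵₁)/g at points where 𝖴𝖴₁𝖵𝖵₁ < 0 and g ≠ 0. -/
theorem hasDerivAt_f
    (u v u' v' : ℝ → ℝ)
    (hu : ∀ x, HasDerivAt u (u' x) x)
    (hu' : ∀ x, HasDerivAt u' (x * u x) x)
    (hv : ∀ x, HasDerivAt v (v' x) x)
    (hv' : ∀ x, HasDerivAt v' (x * v x) x)
    (hu0 : u 0 = 1) (hu'0 : u' 0 = 0) (hv0 : v 0 = 0) (hv'0 : v' 0 = 1)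
    (c : ℝ) (hc : 0 < c)
    (U U1 V V1 : ℝ → ℝ)
    (hU : ∀ y, U y = v' y * u (y + c) - u' y * v (y + c))
    (hU1 : ∀ y, U1 y = v' y * u' (y + c) - u' y * v' (y + c))
    (hV : ∀ y, V y = u y * v (y + c) - v y * u (y + c))
    (hV1 : ∀ y, V1 y = u y * v' (y + c) - v y * u' (y + c))
    (g h : ℝ → ℝ)
    (hg : ∀ y, g y = U y * V1 y + V y * U1 y)
    (hh : ∀ y, h y = -(U y * U1 y) - y * (V y * V1 y) + U1 y * V1 y
        + (y + c) * (U y * V y))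
    (f : ℝ → ℝ)
    (hf : ∀ y, f y = 2 * Real.sqrt (-(U y * U1 y * V y * V1 y)) / g y) :
    ∀ y : ℝ, U y * U1 y * V y * V1 y < 0 → g y ≠ 0 →
      HasDerivAt f
        (-h y / (g y ^ 2 * Real.sqrt (-(U y * U1 y * V y * V1 y)))) y := by
  intro y hneg hgy
  have hW := airy_wronskian u v u' v' hu hu' hv hv' hu0 hu'0 hv0 hv'0
  have hdet : U y * V1 y - V y * U1 y = 1 := by
    rw [hU, hU1, hV, hV1]
    linear_combination (u (y + c) * v' (y + c) - u' (y + c) * v (y + c)) * hW y + hW (y + c)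
  have huc := (hu (y + c)).comp_add_const y c
  have huc' := (hu' (y + c)).comp_add_const y c
  have hvc := (hv (y + c)).comp_add_const y c
  have hvc' := (hv' (y + c)).comp_add_const y c
  have dU : HasDerivAt U (U1 y - y * V y) y := by
    rw [funext hU]
    refine (((hv' y).fun_mul huc).fun_sub ((hu' y).fun_mul hvc)).congr_deriv ?_
    rw [hU1, hV]; ring
  have dU1 : HasDerivAt U1 ((y + c) * U y - y * V1 y) y := by
    rw [funext hU1]
    refine (((hv' y).fun_mul huc').fun_sub ((hu' y).fun_mul hvc')).congr_deriv ?_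
    rw [hU, hV1]; ring
  have dV : HasDerivAt V (V1 y - U y) y := by
    rw [funext hV]
    refine (((hu y).fun_mul hvc).fun_sub ((hv y).fun_mul huc)).congr_deriv ?_
    rw [hV1, hU]; ring
  have dV1 : HasDerivAt V1 ((y + c) * V y - U1 y) y := by
    rw [funext hV1]
    refine (((hu y).fun_mul hvc').fun_sub ((hv y).fun_mul huc')).congr_deriv ?_
    rw [hV, hU1]; ring
  have da : HasDerivAt (fun t => U t * V1 t) (h y) y := by
    refine (dU.fun_mul dV1).congr_deriv ?_
    rw [hh]; ring
  have db : HasDerivAt (fun t => V t * U1 t) (h y) y := by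
    refine (dV.fun_mul dU1).congr_deriv ?_
    rw [hh]; ring
  have dg : HasDerivAt g (2 * h y) y := by
    rw [funext hg]
    exact (da.fun_add db).congr_deriv (by ring)
  have dP : HasDerivAt (fun t => -(U t * U1 t * V t * V1 t)) (-(h y * g y)) y := by
    have hP : (fun t => -(U t * U1 t * V t * V1 t)) =
        fun t => -((U t * V1 t) * (V t * U1 t)) := by
      funext t; ring
    rw [hP]
    refine (da.fun_mul db).fun_neg.congr_deriv ?_
    rw [hg]; ring
  have hpos : 0 < -(U y * U1 y * V y * V1 y) := neg_pos.mpr hneg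
  have hs : 0 < Real.sqrt (-(U y * U1 y * V y * V1 y)) := Real.sqrt_pos.mpr hpos
  have hsq := Real.sq_sqrt hpos.le
  rw [funext hf]
  refine (((dP.sqrt hpos.ne').const_mul 2).fun_div dg hgy).congr_deriv ?_
  -- `(a + b)² - 4ab = (a - b)² = 1`
  have key : g y ^ 2 + 4 * Real.sqrt (-(U y * U1 y * V y * V1 y)) ^ 2 = 1 := by
    rw [hsq, hg]
    linear_combination (U y * V1 y - V y * U1 y + 1) * hdet
  generalize Real.sqrt (-(U y * U1 y * V y * V1 y)) = s at *
  have hs' := hs.ne'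
  field_simp
  linear_combination (-h y) * key
end

section
/- Let N be a natural number and let a, b, t, P, Q be real numbers with a < 0, 0 < b < −a, t > 0 and P·Q < 0. Then P·Q·((a+b)^{2N+1} + (a−b)^{2N+1}) + (t·P² + Q²/t)·((a+b)^{2N+1} − (a−b)^{2N+1}) > 0. -/
/-- Positivity of Φ in the spectral gaps, second case: a < 0, odd exponent. -/
theorem Phi_pos_gap_second_case
    (N : ℕ) (a b t P Q : ℝ)
    (ha : a < 0) (hb : 0 < b) (hba : b < -a) (ht : 0 < t) (hPQ : P * Q < 0) :
    0 < P * Q * ((a + b) ^ (2 * N + 1) + (a - b) ^ (2 * N + 1)) +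
        (t * P ^ 2 + Q ^ 2 / t) * ((a + b) ^ (2 * N + 1) - (a - b) ^ (2 * N + 1)) := by
  have hodd : Odd (2 * N + 1) := odd_two_mul_add_one N
  -- Both bases are negative, so their odd powers are negative and the first term is positive.
  have h1 : (a + b) ^ (2 * N + 1) < 0 := hodd.pow_neg (by linarith)
  have h2 : (a - b) ^ (2 * N + 1) < 0 := hodd.pow_neg (by linarith)
  -- Odd powers are strictly increasing on all of ℝ, so the second term is nonnegative.
  have h3 : (a - b) ^ (2 * N + 1) < (a + b) ^ (2 * N + 1) :=
    hodd.strictMono_pow (by linarith)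
  have h4 : 0 ≤ t * P ^ 2 + Q ^ 2 / t := by positivity
  exact add_pos_of_pos_of_nonneg (mul_pos_of_neg_of_neg hPQ (add_neg h1 h2))
    (mul_nonneg h4 (sub_nonneg.mpr h3.le))
end

section
/- Let Y₁ < Y₂ be real numbers and assume: (i) for every y ∈ (Y₁, Y₂), 𝖴(y)·𝖴₁(y) < 0 and 𝖵(y)·𝖵₁(y) > 0; (ii) (𝖴·𝖴₁·𝖵·𝖵₁)(Y₁) = 0 and (𝖴·𝖴₁·𝖵·𝖵₁)(Y₂) = 0; (iii) g(Y₁) < 0 and g(Y₂) > 0; (iv) h(y) > 0 for every y ∈ [Y₁, Y₂]. Define φ̃(y) as the argument (in [0, π]) of the complex number g(y) + 2·√(−𝖴(y)·𝖴₁(y)·𝖵(y)·𝖵₁(y))·i. Then φ̃ is continuous and strictly decreasing on [Y₁, Y₂], φ̃(Y₁) = π, φ̃(Y₂) = 0, and φ̃ maps [Y₁, Y₂] bijectively onto [0, π]. -/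
/-!
The Wronskian `u v' - u' v` of the two Airy solutions is identically `1`. Multiplying its values at
`y` and `y + c` gives `U V₁ - V U₁ = 1`, hence `g² + 4 (-U U₁ V V₁) = (U V₁ - V U₁)² = 1`: wherever
`-U U₁ V V₁ ≥ 0`, the complex number defining `φ̃` lies on the upper unit semicircle, so that
`φ̃ = arccos g`. The Airy equation yields `g' = 2 h`, so `g` is strictly increasing on the band.
At the end points `g² = 1`, and the signs there force `g = -1` and `g = 1`. Everything then follows
from the corresponding properties of `arccos` on `[-1, 1]` and the intermediate value theorem.
-/

lemma airy_wronskian_eq_one (u v u' v' : ℝ → ℝ)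
    (hu : ∀ x, HasDerivAt u (u' x) x) (hu' : ∀ x, HasDerivAt u' (x * u x) x)
    (hv : ∀ x, HasDerivAt v (v' x) x) (hv' : ∀ x, HasDerivAt v' (x * v x) x)
    (hu0 : u 0 = 1) (hv0 : v 0 = 0) (hv'0 : v' 0 = 1) (x : ℝ) :
    u x * v' x - u' x * v x = 1 := by
  have hd : ∀ x, HasDerivAt (fun x => u x * v' x - u' x * v x) 0 x := fun x => by
    refine (((hu x).mul (hv' x)).sub ((hu' x).mul (hv x))).congr_deriv ?_
    ring
  have hconst := is_const_of_deriv_eq_zero (fun x => (hd x).differentiableAt)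
    (fun x => (hd x).deriv) x 0
  simpa [hu0, hv0, hv'0] using hconst

/-- A point `a + b i` of the upper unit semicircle, with `b = 2 √q`, has argument `arccos a`. -/
lemma arg_eq_arccos_of_sq_add {a q : ℝ} (hq : 0 ≤ q) (haq : a ^ 2 + 4 * q = 1) :
    Complex.arg ((a : ℂ) + (2 * Real.sqrt q : ℝ) * Complex.I) = Real.arccos a := by
  have hnorm : ‖(a : ℂ) + (2 * Real.sqrt q : ℝ) * Complex.I‖ = 1 := by
    rw [Complex.norm_add_mul_I, mul_pow, Real.sq_sqrt hq, Real.sqrt_eq_one]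
    linarith
  rw [Complex.arg_of_im_nonneg_of_ne_zero _ (norm_ne_zero_iff.1 (by rw [hnorm]; norm_num)), hnorm]
  · simp
  · simp

/-- Even-band case of Proposition 2.2: the argument function φ̃ is a strictly
    decreasing homeomorphism from the spectral band [Y₁, Y₂] onto [0, π]. -/
theorem arg_strictAnti_even_band
    (u v u' v' : ℝ → ℝ)
    (hu : ∀ x, HasDerivAt u (u' x) x)
    (hu' : ∀ x, HasDerivAt u' (x * u x) x)
    (hv : ∀ x, HasDerivAt v (v' x) x)
    (hv' : ∀ x, HasDerivAt v' (x * v x) x)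
    (hu0 : u 0 = 1) (hu'0 : u' 0 = 0) (hv0 : v 0 = 0) (hv'0 : v' 0 = 1)
    (c : ℝ) (hc : 0 < c)
    (U U1 V V1 : ℝ → ℝ)
    (hU : ∀ y, U y = v' y * u (y + c) - u' y * v (y + c))
    (hU1 : ∀ y, U1 y = v' y * u' (y + c) - u' y * v' (y + c))
    (hV : ∀ y, V y = u y * v (y + c) - v y * u (y + c))
    (hV1 : ∀ y, V1 y = u y * v' (y + c) - v y * u' (y + c))
    (g h : ℝ → ℝ)
    (hg : ∀ y, g y = U y * V1 y + V y * U1 y)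
    (hh : ∀ y, h y = -(U y * U1 y) - y * (V y * V1 y) + U1 y * V1 y
        + (y + c) * (U y * V y))
    (Y₁ Y₂ : ℝ) (hY : Y₁ < Y₂)
    (hsigns : ∀ y ∈ Set.Ioo Y₁ Y₂, U y * U1 y < 0 ∧ 0 < V y * V1 y)
    (hzero₁ : U Y₁ * U1 Y₁ * V Y₁ * V1 Y₁ = 0)
    (hzero₂ : U Y₂ * U1 Y₂ * V Y₂ * V1 Y₂ = 0)
    (hg₁ : g Y₁ < 0) (hg₂ : 0 < g Y₂)
    (hhpos : ∀ y ∈ Set.Icc Y₁ Y₂, 0 < h y)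
    (φt : ℝ → ℝ)
    (hφt : ∀ y, φt y = Complex.arg
      ((g y : ℂ) + (2 * Real.sqrt (-(U y * U1 y * V y * V1 y)) : ℝ) * Complex.I)) :
    ContinuousOn φt (Set.Icc Y₁ Y₂) ∧
    StrictAntiOn φt (Set.Icc Y₁ Y₂) ∧
    φt Y₁ = Real.pi ∧
    φt Y₂ = 0 ∧
    Set.BijOn φt (Set.Icc Y₁ Y₂) (Set.Icc 0 Real.pi) := by
  have hW := airy_wronskian_eq_one u v u' v' hu hu' hv hv' hu0 hv0 hv'0
  have hdet : ∀ y, U y * V1 y - V y * U1 y = 1 := fun y => by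
    rw [hU, hU1, hV, hV1]
    linear_combination (u (y + c) * v' (y + c) - u' (y + c) * v (y + c)) * hW y + hW (y + c)
  have hcirc : ∀ y, g y ^ 2 + 4 * (-(U y * U1 y * V y * V1 y)) = 1 := fun y => by
    rw [hg]
    linear_combination (U y * V1 y - V y * U1 y + 1) * hdet y
  have hdg : ∀ y, HasDerivAt g (2 * h y) y := fun y => by
    have hs : ∀ {f : ℝ → ℝ} {f' : ℝ}, HasDerivAt f f' (y + c) →
        HasDerivAt (fun t => f (t + c)) f' y := fun hf => hf.comp_add_const y c
    have dU : HasDerivAt U (U1 y - y * V y) y := by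
      rw [funext hU]
      refine (((hv' y).mul (hs (hu _))).sub ((hu' y).mul (hs (hv _)))).congr_deriv ?_
      rw [hU1, hV]
      ring
    have dU1 : HasDerivAt U1 ((y + c) * U y - y * V1 y) y := by
      rw [funext hU1]
      refine (((hv' y).mul (hs (hu' _))).sub ((hu' y).mul (hs (hv' _)))).congr_deriv ?_
      rw [hU, hV1]
      ring
    have dV : HasDerivAt V (V1 y - U y) y := by
      rw [funext hV]
      refine (((hu y).mul (hs (hv _))).sub ((hv y).mul (hs (hu _)))).congr_deriv ?_
      rw [hU, hV1]
      ring
    have dV1 : HasDerivAt V1 ((y + c) * V y - U1 y) y := by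
      rw [funext hV1]
      refine (((hu y).mul (hs (hv' _))).sub ((hv y).mul (hs (hu' _)))).congr_deriv ?_
      rw [hU1, hV]
      ring
    rw [funext hg]
    refine ((dU.mul dV1).add (dV.mul dU1)).congr_deriv ?_
    rw [hh]
    ring
  have hgcont : Continuous g := continuous_iff_continuousAt.2 fun y => (hdg y).continuousAt
  have hgmono : StrictMonoOn g (Set.Icc Y₁ Y₂) := by
    refine strictMonoOn_of_deriv_pos (convex_Icc _ _) hgcont.continuousOn fun y hy => ?_
    rw [(hdg y).deriv]
    linarith [hhpos y (interior_subset hy)]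
  have hq : ∀ y ∈ Set.Icc Y₁ Y₂, 0 ≤ -(U y * U1 y * V y * V1 y) := fun y hy => by
    rcases hy.1.eq_or_lt with rfl | h1
    · simp [hzero₁]
    rcases hy.2.eq_or_lt with rfl | h2
    · simp [hzero₂]
    obtain ⟨hn, hp⟩ := hsigns y ⟨h1, h2⟩
    nlinarith [mul_neg_of_neg_of_pos hn hp]
  have hgmem : Set.MapsTo g (Set.Icc Y₁ Y₂) (Set.Icc (-1) 1) := fun y hy =>
    abs_le.1 ((sq_le_one_iff_abs_le_one _).1 (by linarith [hcirc y, hq y hy]))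
  have hφ : Set.EqOn φt (Real.arccos ∘ g) (Set.Icc Y₁ Y₂) := fun y hy => by
    rw [hφt]
    exact arg_eq_arccos_of_sq_add (hq y hy) (hcirc y)
  have hm₁ : Y₁ ∈ Set.Icc Y₁ Y₂ := Set.left_mem_Icc.2 hY.le
  have hm₂ : Y₂ ∈ Set.Icc Y₁ Y₂ := Set.right_mem_Icc.2 hY.le
  have hgY₁ : g Y₁ = -1 := by
    have := hcirc Y₁
    rw [hzero₁] at this
    nlinarith
  have hgY₂ : g Y₂ = 1 := by
    have := hcirc Y₂
    rw [hzero₂] at this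
    nlinarith
  have hφ₁ : φt Y₁ = Real.pi := by rw [hφ hm₁, Function.comp, hgY₁, Real.arccos_neg_one]
  have hφ₂ : φt Y₂ = 0 := by rw [hφ hm₂, Function.comp, hgY₂, Real.arccos_one]
  have hcont : ContinuousOn φt (Set.Icc Y₁ Y₂) :=
    (Real.continuous_arccos.comp hgcont).continuousOn.congr hφ
  have hanti : StrictAntiOn φt (Set.Icc Y₁ Y₂) :=
    (Real.strictAntiOn_arccos.comp_strictMonoOn hgmono hgmem).congr hφ.symm
  refine ⟨hcont, hanti, hφ₁, hφ₂, fun y hy => ?_, hanti.injOn, ?_⟩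
  · rw [hφ hy]
    exact ⟨Real.arccos_nonneg _, Real.arccos_le_pi _⟩
  · have hivt := intermediate_value_Icc' hY.le hcont
    rwa [hφ₁, hφ₂] at hivt
end

section
/- For every integer j ≥ 1, the following three inequalities hold, where S_j = (2/9)·(3π/2)^{2/3}·j^{−1/3} + 2·((3π/8)·(4j+3))^{−2/3}: (a) (1/(2√2))·(4j+3)^{−1} ≤ (4/3)·S_j^{3/2} ≤ (16/27)·π·j^{−1/2}; (b) S_j^{1/2} ≤ (2/3)·(3π/2)^{1/3}·j^{−1/6}; (c) S_j^{−1/2} ≤ (1/√2)·((3π/8)·(4j+3))^{1/3}. -/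
/-!
Write `A = 3π/2` and `B = (3π/8)(4j+3)`, so that `S_j = (2/9) A^{2/3} j^{-1/3} + 2 B^{-2/3}`.
Everything follows from the two-sided estimate `(√2 B^{-1/3})² ≤ S_j ≤ ((2/3) A^{1/3} j^{-1/6})²`
by taking real powers.

The lower bound drops the first summand. The upper bound says that the second summand is at most
the first, that is `27 √j ≤ A B`, which holds because `4j + 3 ≥ 6 √j` and
`A B = (9π²/16)(4j+3)` with `π > 3`.
-/

open Real

/-- The comparison of the two summands of `S_j`, cleared of denominators and raised to the
power `3/2`. -/
lemma sqrt_le_mul_aux (x : ℝ) (hx : 0 ≤ x) :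
    27 * √x ≤ (3 * π / 2) * ((3 * π / 8) * (4 * x + 3)) := by
  have hp := Real.pi_gt_three
  have h1 : 6 * √x ≤ 4 * x + 3 := by
    nlinarith [Real.sq_sqrt hx, sq_nonneg (√x - 3 / 4)]
  have h2 : (9 : ℝ) ≤ π ^ 2 := by nlinarith
  nlinarith [mul_le_mul h2 h1 (by positivity) (by positivity), Real.sqrt_nonneg x]

lemma sq_rpow_aux (x p : ℝ) (hx : 0 ≤ x) : (x ^ 2) ^ p = x ^ (2 * p) := by
  rw [← Real.rpow_natCast, ← Real.rpow_mul hx]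
  norm_num

lemma Sj_lower (A B x : ℝ) (hA : 0 < A) (hB : 0 < B) (hx : 0 < x) :
    (√2 * B ^ (-(1 : ℝ) / 3)) ^ 2 ≤
      (2 / 9) * A ^ ((2 : ℝ) / 3) * x ^ (-(1 : ℝ) / 3) + 2 * B ^ (-(2 : ℝ) / 3) := by
  have h : (B ^ (-(1 : ℝ) / 3)) ^ 2 = B ^ (-(2 : ℝ) / 3) := by
    rw [← Real.rpow_mul_natCast hB.le]; norm_num
  rw [mul_pow, h, Real.sq_sqrt (by norm_num)]
  have : 0 ≤ (2 / 9) * A ^ ((2 : ℝ) / 3) * x ^ (-(1 : ℝ) / 3) := by positivity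
  linarith

lemma Sj_upper (A B x : ℝ) (hA : 0 < A) (hB : 0 < B) (hx : 0 < x) (h : 27 * √x ≤ A * B) :
    (2 / 9) * A ^ ((2 : ℝ) / 3) * x ^ (-(1 : ℝ) / 3) + 2 * B ^ (-(2 : ℝ) / 3) ≤
      ((2 / 3) * A ^ ((1 : ℝ) / 3) * x ^ (-(1 : ℝ) / 6)) ^ 2 := by
  have hA2 : (A ^ ((1 : ℝ) / 3)) ^ 2 = A ^ ((2 : ℝ) / 3) := by
    rw [← Real.rpow_mul_natCast hA.le]; norm_num
  have hx2 : (x ^ (-(1 : ℝ) / 6)) ^ 2 = x ^ (-(1 : ℝ) / 3) := by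
    rw [← Real.rpow_mul_natCast hx.le]; norm_num
  -- The hypothesis raised to the power 2/3, using 27^{2/3} = 9.
  have key : 9 * x ^ ((1 : ℝ) / 3) ≤ A ^ ((2 : ℝ) / 3) * B ^ ((2 : ℝ) / 3) := by
    have h3 := Real.rpow_le_rpow (by positivity) h (show (0 : ℝ) ≤ 2 / 3 by norm_num)
    rw [Real.mul_rpow (by norm_num) (Real.sqrt_nonneg x), Real.mul_rpow hA.le hB.le,
      Real.sqrt_eq_rpow, ← Real.rpow_mul hx.le, show (27 : ℝ) = 3 ^ (3 : ℝ) by norm_num,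
      ← Real.rpow_mul (by norm_num)] at h3
    norm_num at h3 ⊢
    exact h3
  have hxi : x ^ (-(1 : ℝ) / 3) = (x ^ ((1 : ℝ) / 3))⁻¹ := by
    rw [← Real.rpow_neg hx.le]; norm_num
  have hBi : B ^ (-(2 : ℝ) / 3) = (B ^ ((2 : ℝ) / 3))⁻¹ := by
    rw [← Real.rpow_neg hB.le]; norm_num
  have h4 : 9 * B ^ (-(2 : ℝ) / 3) ≤ A ^ ((2 : ℝ) / 3) * x ^ (-(1 : ℝ) / 3) := by
    rw [hxi, hBi, ← div_eq_mul_inv, ← div_eq_mul_inv, div_le_div_iff₀ (by positivity)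
      (by positivity)]
    exact key
  rw [mul_pow, mul_pow, hA2, hx2]
  linarith

/-- Inequalities (eq_demo_lemma1_approx07)–(eq_demo_lemma1_approx09): for j ≥ 1,
    with S_j = (2/9)(3π/2)^{2/3} j^{−1/3} + 2((3π/8)(4j+3))^{−2/3},
    (a) (1/(2√2))(4j+3)^{−1} ≤ (4/3) S_j^{3/2} ≤ (16/27)π j^{−1/2};
    (b) S_j^{1/2} ≤ (2/3)(3π/2)^{1/3} j^{−1/6};
    (c) S_j^{−1/2} ≤ (1/√2)((3π/8)(4j+3))^{1/3}. -/
theorem Sj_power_bounds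
    (j : ℕ) (hj : 1 ≤ j) :
    ((1 / (2 * Real.sqrt 2)) * (4 * (j : ℝ) + 3)⁻¹ ≤
        (4 / 3) * ((2 / 9) * (3 * π / 2) ^ ((2 : ℝ) / 3) * (j : ℝ) ^ (-(1 : ℝ) / 3)
          + 2 * ((3 * π / 8) * (4 * (j : ℝ) + 3)) ^ (-(2 : ℝ) / 3)) ^ ((3 : ℝ) / 2) ∧
      (4 / 3) * ((2 / 9) * (3 * π / 2) ^ ((2 : ℝ) / 3) * (j : ℝ) ^ (-(1 : ℝ) / 3)
          + 2 * ((3 * π / 8) * (4 * (j : ℝ) + 3)) ^ (-(2 : ℝ) / 3)) ^ ((3 : ℝ) / 2) ≤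
        (16 / 27) * π * (j : ℝ) ^ (-(1 : ℝ) / 2)) ∧
    ((2 / 9) * (3 * π / 2) ^ ((2 : ℝ) / 3) * (j : ℝ) ^ (-(1 : ℝ) / 3)
        + 2 * ((3 * π / 8) * (4 * (j : ℝ) + 3)) ^ (-(2 : ℝ) / 3)) ^ ((1 : ℝ) / 2) ≤
      (2 / 3) * (3 * π / 2) ^ ((1 : ℝ) / 3) * (j : ℝ) ^ (-(1 : ℝ) / 6) ∧
    ((2 / 9) * (3 * π / 2) ^ ((2 : ℝ) / 3) * (j : ℝ) ^ (-(1 : ℝ) / 3)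
        + 2 * ((3 * π / 8) * (4 * (j : ℝ) + 3)) ^ (-(2 : ℝ) / 3)) ^ (-(1 : ℝ) / 2) ≤
      (1 / Real.sqrt 2) * ((3 * π / 8) * (4 * (j : ℝ) + 3)) ^ ((1 : ℝ) / 3) := by
  have hx : (0 : ℝ) < j := by exact_mod_cast hj
  have hp := Real.pi_gt_three
  have hp4 := Real.pi_le_four
  have hA : 0 < 3 * π / 2 := by positivity
  have hB : 0 < (3 * π / 8) * (4 * (j : ℝ) + 3) := by positivity
  have hl := Sj_lower _ _ _ hA hB hx
  have hu := Sj_upper _ _ _ hA hB hx (sqrt_le_mul_aux _ hx.le)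
  set S := (2 / 9) * (3 * π / 2) ^ ((2 : ℝ) / 3) * (j : ℝ) ^ (-(1 : ℝ) / 3)
        + 2 * ((3 * π / 8) * (4 * (j : ℝ) + 3)) ^ (-(2 : ℝ) / 3) with hS
  have hSpos : 0 < S := by positivity
  have hs2 : √2 * √2 = 2 := Real.mul_self_sqrt (by norm_num)
  refine ⟨⟨?_, ?_⟩, ?_, ?_⟩
  · have h := Real.rpow_le_rpow (by positivity) hl (show (0 : ℝ) ≤ 3 / 2 by norm_num)
    rw [sq_rpow_aux _ _ (by positivity), show (2 : ℝ) * (3 / 2) = (3 : ℕ) by norm_num,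
      Real.rpow_natCast, mul_pow, ← Real.rpow_mul_natCast hB.le,
      show -(1 : ℝ) / 3 * (3 : ℕ) = -1 by norm_num, Real.rpow_neg_one, mul_inv] at h
    refine le_trans ?_ (mul_le_mul_of_nonneg_left h (by norm_num))
    have hc : 1 / (2 * √2) ≤ 4 / 3 * (√2 ^ 3 * (3 * π / 8)⁻¹) := by
      rw [← div_eq_mul_inv, ← mul_div_assoc, div_le_div_iff₀ (by positivity) (by positivity)]
      have : √2 ^ 3 * √2 = 4 := by
        calc √2 ^ 3 * √2 = (√2 * √2) ^ 2 := by ring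
          _ = 4 := by rw [hs2]; norm_num
      nlinarith
    calc _ ≤ 4 / 3 * (√2 ^ 3 * (3 * π / 8)⁻¹) * (4 * (j : ℝ) + 3)⁻¹ :=
          mul_le_mul_of_nonneg_right hc (by positivity)
      _ = _ := by ring
  · have h := Real.rpow_le_rpow hSpos.le hu (show (0 : ℝ) ≤ 3 / 2 by norm_num)
    rw [sq_rpow_aux _ _ (by positivity), show (2 : ℝ) * (3 / 2) = (3 : ℕ) by norm_num,
      Real.rpow_natCast, mul_pow, mul_pow, ← Real.rpow_mul_natCast hA.le,
      ← Real.rpow_mul_natCast hx.le, show (1 : ℝ) / 3 * (3 : ℕ) = 1 by norm_num,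
      show -(1 : ℝ) / 6 * (3 : ℕ) = -1 / 2 by norm_num, Real.rpow_one] at h
    linarith
  · have h := Real.rpow_le_rpow hSpos.le hu (show (0 : ℝ) ≤ 1 / 2 by norm_num)
    rwa [sq_rpow_aux _ _ (by positivity), show (2 : ℝ) * (1 / 2) = 1 by norm_num,
      Real.rpow_one] at h
  · have h := Real.rpow_le_rpow_of_nonpos (by positivity) hl
      (show -(1 : ℝ) / 2 ≤ 0 by norm_num)
    rwa [sq_rpow_aux _ _ (by positivity), show (2 : ℝ) * (-1 / 2) = -1 by norm_num,
      Real.rpow_neg_one, mul_inv, ← Real.rpow_neg hB.le,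
      show -(-(1 : ℝ) / 3) = 1 / 3 by norm_num, ← one_div] at h
end
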